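/- arXiv:2508.20753 — 3 statements merged into one kernel-verified Lean document; each statement's English description precedes it below -/
import Mathlib

section
/- For every integer T ≥ 2, trace(Q · Φ(1)ᵀ · Q · Φ(1)) = (T-1)(T+1)/12. -/
/-!
Multiplying by `Q` on the left subtracts from each column its mean.
With indices `0, …, T - 1`, column `j` of `Φ(1)` has
`T - 1 - j` ones and column `j` of `Φ(1)ᵀ` has `j` ones, so
`(Q Φ(1))ᵢⱼ = [j < i] - (T - 1 - j) / T` and `(Q Φ(1)ᵀ)ᵢⱼ = [i < j] - j / T`.
Hence the trace is
`∑ᵢⱼ ([i < j] - j / T) ([i < j] - (T - 1 - i) / T)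
  = (1 / T) ∑_{i < j} (1 + i - j) + (1 / T²) (∑ⱼ j) (∑ᵢ (T - 1 - i))`,
where the first double sum is `-T (T - 1) (T - 2) / 6` and each factor of the last term is
`T (T - 1) / 2`.
-/

open Finset Matrix

/-- The `T×T` centering projection matrix `Q = I_T - (1/T)·ι ιᵀ`, with entries
`δ_{ij} - 1/T`. -/
noncomputable def Qmat (T : ℕ) : Matrix (Fin T) (Fin T) ℝ :=
  fun i j => (if i = j then 1 else 0) - 1 / (T : ℝ)

/-- The `T×T` matrix `Φ(ρ)` whose `(i,j)` entry is `ρ^{i-j-1}` when `i > j` and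
`0` otherwise. -/
noncomputable def Phi (T : ℕ) (ρ : ℝ) : Matrix (Fin T) (Fin T) ℝ :=
  fun i j => if (j : ℕ) < (i : ℕ) then ρ ^ ((i : ℕ) - (j : ℕ) - 1) else 0

theorem sum_range_ite_lt (n j : ℕ) (hj : j ≤ n) (f : ℕ → ℝ) :
    ∑ i ∈ range n, (if i < j then f i else 0) = ∑ i ∈ range j, f i := by
  rw [← Finset.sum_filter]
  congr 1
  ext i
  simp only [Finset.mem_filter, Finset.mem_range]
  omega

theorem sum_range_cast (n : ℕ) : ∑ i ∈ range n, (i : ℝ) = n * (n - 1) / 2 := by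
  induction n with
  | zero => simp
  | succ k ih => rw [Finset.sum_range_succ, ih]; push_cast; ring

theorem sum_range_lower (n : ℕ) :
    ∑ j ∈ range n, ∑ i ∈ range j, (1 + (i : ℝ) - j) = -(n * (n - 1) * (n - 2) / 6) := by
  induction n with
  | zero => simp
  | succ k ih =>
    rw [Finset.sum_range_succ, ih]
    simp only [Finset.sum_sub_distrib, Finset.sum_add_distrib, sum_range_cast,
      Finset.sum_const, Finset.card_range, nsmul_eq_mul]
    push_cast; ring

/-- Left multiplication by `Q` subtracts the column means. -/
theorem Qmat_mul_apply (T : ℕ) (M : Matrix (Fin T) (Fin T) ℝ) (i j : Fin T) :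
    (Qmat T * M) i j = M i j - (∑ k, M k j) / T := by
  simp only [Matrix.mul_apply, Qmat, sub_mul, Finset.sum_sub_distrib, ite_mul, one_mul, zero_mul,
    Finset.sum_ite_eq, Finset.mem_univ, if_true, ← Finset.mul_sum]
  ring

theorem Phi_one_apply (T : ℕ) (i j : Fin T) :
    Phi T 1 i j = if (j : ℕ) < (i : ℕ) then 1 else 0 := by
  simp [Phi]

theorem sum_Phi_row (T : ℕ) (j : Fin T) : ∑ k, Phi T 1 j k = (j : ℝ) := by
  simp only [Phi_one_apply]
  rw [Fin.sum_univ_eq_sum_range (fun k => if k < (j : ℕ) then (1 : ℝ) else 0) T,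
    sum_range_ite_lt T j j.2.le]
  simp

theorem sum_Phi_col (T : ℕ) (j : Fin T) : ∑ k, Phi T 1 k j = (T : ℝ) - 1 - j := by
  have h (k : ℕ) : (if (j : ℕ) < k then (1 : ℝ) else 0)
      = 1 - if k < (j : ℕ) + 1 then (1 : ℝ) else 0 := by
    by_cases hk : (j : ℕ) < k
    · simp [hk, show ¬ k < (j : ℕ) + 1 by omega]
    · simp [hk, show k < (j : ℕ) + 1 by omega]
  simp only [Phi_one_apply]
  rw [Fin.sum_univ_eq_sum_range (fun k => if (j : ℕ) < k then (1 : ℝ) else 0) T]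
  simp only [h, Finset.sum_sub_distrib]
  rw [sum_range_ite_lt T (j + 1) j.2]
  simp
  ring

/-- For every integer `T ≥ 2`, `trace(Q · Φ(1)ᵀ · Q · Φ(1)) = (T-1)(T+1)/12`. -/
theorem stmt_9 (T : ℕ) (hT : 2 ≤ T) :
    Matrix.trace (Qmat T * (Phi T 1)ᵀ * Qmat T * Phi T 1)
      = ((T : ℝ) - 1) * ((T : ℝ) + 1) / 12 := by
  have hT0 : (T : ℝ) ≠ 0 := by
    have : T ≠ 0 := by omega
    exact_mod_cast this
  rw [Matrix.mul_assoc (Qmat T * (Phi T 1)ᵀ), Matrix.trace_mul_comm]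
  have entry_Phi (i j : Fin T) : (Qmat T * Phi T 1) i j
      = (if (j : ℕ) < (i : ℕ) then 1 else 0) - ((T : ℝ) - 1 - j) / T := by
    rw [Qmat_mul_apply, sum_Phi_col, Phi_one_apply]
  have entry_Phi_transpose (i j : Fin T) : (Qmat T * (Phi T 1)ᵀ) i j
      = (if (i : ℕ) < (j : ℕ) then 1 else 0) - (j : ℝ) / T := by
    simp only [Qmat_mul_apply, Matrix.transpose_apply, sum_Phi_row]
    rw [Phi_one_apply]
  simp only [Matrix.trace, Matrix.diag_apply]
  simp only [Matrix.mul_apply (M := Qmat T * Phi T 1), entry_Phi, entry_Phi_transpose]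
  have expand (j i : ℕ) :
      ((if i < j then (1 : ℝ) else 0) - ((T : ℝ) - 1 - i) / T)
        * ((if i < j then (1 : ℝ) else 0) - (j : ℝ) / T)
      = (1 / T) * (if i < j then 1 + (i : ℝ) - j else 0)
        + (1 / (T : ℝ) ^ 2) * ((j : ℝ) * ((T : ℝ) - 1 - i)) := by
    split_ifs <;> field_simp <;> ring
  simp only [expand]
  have inner_sum (j : Fin T) := Fin.sum_univ_eq_sum_range
    (fun i : ℕ => (1 / (T : ℝ)) * (if i < (j : ℕ) then 1 + (i : ℝ) - (j : ℕ) else 0)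
        + (1 / (T : ℝ) ^ 2) * (((j : ℕ) : ℝ) * ((T : ℝ) - 1 - i))) T
  simp only [inner_sum]
  rw [Fin.sum_univ_eq_sum_range (fun j : ℕ => ∑ i ∈ range T,
    ((1 / (T : ℝ)) * (if i < j then 1 + (i : ℝ) - (j : ℝ) else 0)
        + (1 / (T : ℝ) ^ 2) * ((j : ℝ) * ((T : ℝ) - 1 - i)))) T]
  have lower : ∑ j ∈ range T, ∑ i ∈ range T, (if i < j then 1 + (i : ℝ) - (j : ℝ) else 0)
      = -(T * (T - 1) * (T - 2) / 6) := by
    rw [← sum_range_lower]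
    refine Finset.sum_congr rfl fun j hj => ?_
    exact sum_range_ite_lt T j (Finset.mem_range.mp hj).le fun i => 1 + (i : ℝ) - j
  simp only [Finset.sum_add_distrib, ← Finset.mul_sum, lower, ← Finset.sum_mul,
    Finset.sum_sub_distrib, sum_range_cast, Finset.sum_const, Finset.card_range, nsmul_eq_mul]
  field_simp
  ring
end

section
/- For every integer T ≥ 2, trace( (Φ(1)ᵀ · Q · Φ(1))² ) = (2T⁴ + 5T² - 7)/180. -/
/-! Column `j` of `Φ(1)` is the indicator of the rows below row `j`, of which there are
`p = T - 1 - j`. Hence `Φ(1)ᵀ Q Φ(1)` has entries `min p q - p q / T` with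
`p = T - 1 - j` and `q = T - 1 - k` (`gram_apply`), the covariance of a discrete Brownian bridge.
It is symmetric, so the trace of its square is the sum of the squared entries, that is `T⁻²` times
the sum of `(T min p q - p q)²` over `0 ≤ p, q < T`. On `p ≤ q` the summand is `p² (T - q)²`, so
with `T` replaced by a free real `c` the sum over `0 ≤ p, q < n` satisfies a simple recursion in
`n`; its polynomial solution is `sum_sq_bridge`. -/

open Finset Matrix

/-- Row `i` of `Φ(1)` meets column `j` when `j < i`; columns `j` and `k` overlap in
`min (T - 1 - j) (T - 1 - k)` rows. -/
lemma sum_Phi_mul_Phi (T : ℕ) (j k : Fin T) :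
    ∑ i, Phi T 1 i j * Phi T 1 i k = ((min (T - 1 - (j : ℕ)) (T - 1 - (k : ℕ)) : ℕ) : ℝ) := by
  have h : ∀ i : Fin T, Phi T 1 i j * Phi T 1 i k = if max j k < i then (1 : ℝ) else 0 := by
    intro i
    simp only [Phi, one_pow, Fin.val_fin_lt, max_lt_iff]
    by_cases h1 : j < i <;> by_cases h2 : k < i <;> simp [h1, h2]
  rw [Finset.sum_congr rfl fun i _ => h i, Finset.sum_boole]
  congr 1
  have h2 : (Finset.univ.filter fun i => max j k < i) = Finset.Ioi (max j k) := by
    ext i; simp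
  rw [h2, Fin.card_Ioi]
  rcases le_total j k with h3 | h3
  · rw [max_eq_right h3]; have : (j : ℕ) ≤ k := h3; omega
  · rw [max_eq_left h3]; have : (k : ℕ) ≤ j := h3; omega

lemma sum_Phi (T : ℕ) (j : Fin T) : ∑ i, Phi T 1 i j = ((T - 1 - (j : ℕ) : ℕ) : ℝ) := by
  have h := sum_Phi_mul_Phi T j j
  rw [min_self] at h
  rw [← h]
  refine Finset.sum_congr rfl fun i _ => ?_
  simp [Phi]

lemma gram_apply (T : ℕ) (j k : Fin T) :
    ((Phi T 1)ᵀ * Qmat T * Phi T 1) j k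
      = ((min (T - 1 - (j : ℕ)) (T - 1 - (k : ℕ)) : ℕ) : ℝ)
        - ((T - 1 - (j : ℕ) : ℕ) : ℝ) * ((T - 1 - (k : ℕ) : ℕ) : ℝ) / T := by
  rw [← sum_Phi_mul_Phi, ← sum_Phi, ← sum_Phi, Matrix.mul_apply]
  have h : ∀ i, ((Phi T 1)ᵀ * Qmat T) j i = Phi T 1 i j - (∑ a, Phi T 1 a j) / T := by
    intro i
    simp only [Matrix.mul_apply, Matrix.transpose_apply, Qmat, mul_sub, Finset.sum_sub_distrib,
      mul_ite, mul_one, mul_zero, Finset.sum_ite_eq', Finset.mem_univ, if_true]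
    rw [← Finset.sum_mul]
    ring
  simp only [h, sub_mul, Finset.sum_sub_distrib]
  rw [← Finset.mul_sum]
  ring

lemma sum_sq_range (n : ℕ) :
    ∑ p ∈ Finset.range n, (p : ℝ) ^ 2 = n * (n - 1) * (2 * n - 1) / 6 := by
  induction n with
  | zero => simp
  | succ n ih => rw [Finset.sum_range_succ, ih]; push_cast; ring

/-- Keeping `c` independent of `n` is what makes the induction on `n` possible. The right-hand side
is `∑ q < n, (c - q)² (2 q³ + q) / 3`, expanded by the power-sum formulas. -/
lemma sum_sq_bridge (c : ℝ) (n : ℕ) :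
    ∑ p ∈ Finset.range n, ∑ q ∈ Finset.range n, (c * ((min p q : ℕ) : ℝ) - p * q) ^ 2
      = c ^ 2 * (2 * (n ^ 2 * (n - 1) ^ 2 / 4) + n * (n - 1) / 2) / 3
        - 2 * c * (2 * (n * (n - 1) * (2 * n - 1) * (3 * n ^ 2 - 3 * n - 1) / 30)
            + n * (n - 1) * (2 * n - 1) / 6) / 3
        + (2 * (n ^ 2 * (n - 1) ^ 2 * (2 * n ^ 2 - 2 * n - 1) / 12)
            + n ^ 2 * (n - 1) ^ 2 / 4) / 3 := by
  induction n with
  | zero => simp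
  | succ n ih =>
    have h1 : ∑ p ∈ Finset.range n, (c * ((min p n : ℕ) : ℝ) - p * n) ^ 2
        = (c - n) ^ 2 * (n * (n - 1) * (2 * n - 1) / 6) := by
      rw [← sum_sq_range, Finset.mul_sum]
      refine Finset.sum_congr rfl fun p hp => ?_
      rw [min_eq_left (Finset.mem_range.1 hp).le]
      ring
    have h2 : ∑ q ∈ Finset.range n, (c * ((min n q : ℕ) : ℝ) - n * q) ^ 2
        = (c - n) ^ 2 * (n * (n - 1) * (2 * n - 1) / 6) := by
      rw [← h1]
      refine Finset.sum_congr rfl fun p _ => ?_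
      rw [min_comm, mul_comm (n : ℝ)]
    simp only [Finset.sum_range_succ, Finset.sum_add_distrib]
    rw [ih, h1, h2, min_self]
    push_cast
    ring

/-- For every integer `T ≥ 2`,
`trace( (Φ(1)ᵀ · Q · Φ(1))² ) = (2T⁴ + 5T² - 7)/180`. -/
theorem stmt_11 (T : ℕ) (hT : 2 ≤ T) :
    Matrix.trace (((Phi T 1)ᵀ * Qmat T * Phi T 1) ^ 2)
      = (2 * (T : ℝ) ^ 4 + 5 * (T : ℝ) ^ 2 - 7) / 180 := by
  have hT0 : (T : ℝ) ≠ 0 := by positivity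
  let g : ℕ → ℕ → ℝ := fun p q => (((min p q : ℕ) : ℝ) - p * q / T) ^ 2
  have h1 : Matrix.trace (((Phi T 1)ᵀ * Qmat T * Phi T 1) ^ 2)
      = ∑ j : Fin T, ∑ k : Fin T, g (T - 1 - (j : ℕ)) (T - 1 - (k : ℕ)) := by
    simp only [Matrix.trace, Matrix.diag_apply, pow_two (_ * _ * _ : Matrix _ _ ℝ)]
    refine Finset.sum_congr rfl fun j _ => ?_
    rw [Matrix.mul_apply]
    refine Finset.sum_congr rfl fun k _ => ?_
    rw [gram_apply, gram_apply, min_comm (T - 1 - (k : ℕ))]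
    ring
  have h2 : ∑ j : Fin T, ∑ k : Fin T, g (T - 1 - (j : ℕ)) (T - 1 - (k : ℕ))
      = ∑ p ∈ Finset.range T, ∑ q ∈ Finset.range T, g p q := by
    rw [← Finset.sum_range_reflect (fun p => ∑ q ∈ Finset.range T, g p q) T, Finset.sum_range]
    refine Finset.sum_congr rfl fun j _ => ?_
    rw [← Finset.sum_range_reflect (fun q => g (T - 1 - (j : ℕ)) q) T, Finset.sum_range]
  have h3 : ∑ p ∈ Finset.range T, ∑ q ∈ Finset.range T, g p q
      = (∑ p ∈ Finset.range T, ∑ q ∈ Finset.range T,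
          ((T : ℝ) * ((min p q : ℕ) : ℝ) - p * q) ^ 2) / (T : ℝ) ^ 2 := by
    simp only [Finset.sum_div]
    refine Finset.sum_congr rfl fun p _ => Finset.sum_congr rfl fun q _ => ?_
    simp only [g]
    field_simp
  rw [h1, h2, h3, sum_sq_bridge]
  field_simp
  ring
end

section
/- Let T ≥ 2 be an integer, set m = (T-2)/(T+1) and c = 3(2T-1)/(T+1)², and define L(r) = (T-1)·ξ(r) - ((T-1)/2)·log(c + (r-m)²) for r ∈ ℝ. Then the fifth derivative of L at 1 equals (T-1)·ξ'''''(1) - (1/3)·(T-1)·(5T² - 20T + 11), where ξ'''''(1) = (T-2)(T-3)(T-4)(T-5)/30, and this quantity is nonzero for every integer T ≥ 2. -/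
/-!
Put `u = r - m` and `q = c + u²`. The first five derivatives of `log q` are the explicit rational
functions `(-1)^(n-1) · 2 · (n-1)! · Re((u - i√c)^n) / q^n`. At `r = 1` one has `1 - m = 3/(T+1)` and
`q = 6/(T+1)`, which gives `2(5T² - 20T + 11)/3` for the fifth one.

Differentiating `ξ` termwise five times gives `1/(T(T-1)) · Σ (T-t)(t-1)(t-2)(t-3)(t-4)` at `1`, and
this is evaluated by telescoping falling factorials.

After removing the factor `(T-1)/30`, the fifth derivative of `L` at `1` is
`T⁴ - 14T³ + 21T² + 46T + 10`. An integer root `T ≥ 2` would divide `10`, and `2`, `5`, `10` are not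
roots.
-/

open Finset

/-- The Lancaster bias-correction polynomial
`ξ(r) = (1/(T(T-1))) · Σ_{t=1}^{T-1} ((T-t)/t) · r^t`. -/
noncomputable def xi (T : ℕ) (r : ℝ) : ℝ :=
  (1 / ((T : ℝ) * ((T : ℝ) - 1))) *
    ∑ t ∈ Finset.Icc 1 (T - 1), (((T : ℝ) - (t : ℝ)) / (t : ℝ)) * r ^ t

/-- The fifth derivative of `log (c + (r - m)²)`. -/
theorem iteratedDeriv_five_log_quadratic (m c : ℝ) (hq : ∀ r : ℝ, c + (r - m) ^ 2 ≠ 0) :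
    iteratedDeriv 5 (fun r : ℝ => Real.log (c + (r - m) ^ 2)) =
      fun r => 48 * (r - m) * ((r - m) ^ 4 - 10 * c * (r - m) ^ 2 + 5 * c ^ 2)
        / (c + (r - m) ^ 2) ^ 5 := by
  have hu : ∀ r : ℝ, HasDerivAt (fun r : ℝ => r - m) 1 r := fun r => (hasDerivAt_id r).sub_const m
  have hQ : ∀ r : ℝ, HasDerivAt (fun r : ℝ => c + (r - m) ^ 2) (2 * (r - m)) r := fun r => by
    simpa using ((hu r).fun_pow 2).const_add c
  have h1 : deriv (fun r : ℝ => Real.log (c + (r - m) ^ 2)) =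
      fun r => 2 * (r - m) / (c + (r - m) ^ 2) := by
    ext r
    exact ((hQ r).log (hq r)).deriv
  have h2 : deriv (fun r : ℝ => 2 * (r - m) / (c + (r - m) ^ 2)) =
      fun r => 2 * (c - (r - m) ^ 2) / (c + (r - m) ^ 2) ^ 2 := by
    ext r
    have hr := hq r
    rw [(((hu r).const_mul 2).fun_div (hQ r) hr).deriv]
    field_simp
    ring
  have h3 : deriv (fun r : ℝ => 2 * (c - (r - m) ^ 2) / (c + (r - m) ^ 2) ^ 2) =
      fun r => 4 * (r - m) * ((r - m) ^ 2 - 3 * c) / (c + (r - m) ^ 2) ^ 3 := by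
    ext r
    have hr := hq r
    rw [(((((hu r).fun_pow 2).const_sub c).const_mul 2).fun_div ((hQ r).fun_pow 2)
      (pow_ne_zero 2 hr)).deriv]
    field_simp
    push_cast
    ring
  have h4 : deriv (fun r : ℝ => 4 * (r - m) * ((r - m) ^ 2 - 3 * c) / (c + (r - m) ^ 2) ^ 3) =
      fun r => -12 * ((r - m) ^ 4 - 6 * c * (r - m) ^ 2 + c ^ 2) / (c + (r - m) ^ 2) ^ 4 := by
    ext r
    have hr := hq r
    rw [((((hu r).const_mul 4).fun_mul (((hu r).fun_pow 2).sub_const (3 * c))).fun_div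
      ((hQ r).fun_pow 3) (pow_ne_zero 3 hr)).deriv]
    field_simp
    push_cast
    ring
  have h5 : deriv (fun r : ℝ =>
        -12 * ((r - m) ^ 4 - 6 * c * (r - m) ^ 2 + c ^ 2) / (c + (r - m) ^ 2) ^ 4) =
      fun r => 48 * (r - m) * ((r - m) ^ 4 - 10 * c * (r - m) ^ 2 + 5 * c ^ 2)
        / (c + (r - m) ^ 2) ^ 5 := by
    ext r
    have hr := hq r
    rw [((((((hu r).fun_pow 4).fun_sub (((hu r).fun_pow 2).const_mul (6 * c))).add_const
      (c ^ 2)).const_mul (-12)).fun_div ((hQ r).fun_pow 4) (pow_ne_zero 4 hr)).deriv]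
    field_simp
    push_cast
    ring
  rw [iteratedDeriv_succ', h1, iteratedDeriv_succ', h2, iteratedDeriv_succ', h3,
    iteratedDeriv_succ', h4, iteratedDeriv_one, h5]

theorem contDiff_xi (T : ℕ) : ContDiff ℝ 5 (xi T) := by
  unfold xi
  fun_prop

/-- The two sums over `t` come from `Σ (t-1)⋯(t-4) = N⋯(N-4)/5` and
`Σ t(t-1)⋯(t-4) = (N+1)N⋯(N-4)/6`. -/
theorem sum_falling (x : ℝ) (N : ℕ) :
    ∑ t ∈ Finset.Icc 1 N,
      (x - (t : ℝ)) * (((t : ℝ) - 1) * ((t : ℝ) - 2) * ((t : ℝ) - 3) * ((t : ℝ) - 4)) =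
    (x / 5 - ((N : ℝ) + 1) / 6) *
      ((N : ℝ) * ((N : ℝ) - 1) * ((N : ℝ) - 2) * ((N : ℝ) - 3) * ((N : ℝ) - 4)) := by
  induction N with
  | zero => simp
  | succ n ih =>
    rw [Finset.sum_Icc_succ_top (by omega), ih]
    push_cast
    ring

theorem iteratedDeriv_five_pow (t : ℕ) :
    iteratedDeriv 5 (fun r : ℝ => r ^ t) 1 =
      (t : ℝ) * ((t : ℝ) - 1) * ((t : ℝ) - 2) * ((t : ℝ) - 3) * ((t : ℝ) - 4) := by
  rw [iteratedDeriv_eq_iterate, iter_deriv_pow]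
  simp [Finset.prod_range_succ]

theorem iteratedDeriv_five_xi (T : ℕ) (hT : 2 ≤ T) :
    iteratedDeriv 5 (xi T) 1
        = ((T : ℝ) - 2) * ((T : ℝ) - 3) * ((T : ℝ) - 4) * ((T : ℝ) - 5) / 30 := by
  have hT' : (2 : ℝ) ≤ T := by exact_mod_cast hT
  have h0 : (T : ℝ) ≠ 0 := by linarith
  have h1 : (T : ℝ) - 1 ≠ 0 := by linarith
  unfold xi
  rw [iteratedDeriv_const_mul_field, iteratedDeriv_fun_sum (fun t _ => by fun_prop)]
  have hterm : ∀ t ∈ Finset.Icc 1 (T - 1),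
      iteratedDeriv 5 (fun r : ℝ => (((T : ℝ) - (t : ℝ)) / (t : ℝ)) * r ^ t) 1 =
      ((T : ℝ) - (t : ℝ)) * (((t : ℝ) - 1) * ((t : ℝ) - 2) * ((t : ℝ) - 3) * ((t : ℝ) - 4)) := by
    intro t ht
    have ht0 : (t : ℝ) ≠ 0 := by
      have := (Finset.mem_Icc.1 ht).1
      exact_mod_cast (by omega : t ≠ 0)
    rw [iteratedDeriv_const_mul_field, iteratedDeriv_five_pow]
    field_simp
  rw [Finset.sum_congr rfl hterm, sum_falling, Nat.cast_sub (by omega)]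
  push_cast
  field_simp
  ring

/-- The quartic has no root among the integers `T ≥ 2`, by the rational root test. -/
theorem quartic_ne_zero (T : ℤ) (hT : 2 ≤ T) :
    T ^ 4 - 14 * T ^ 3 + 21 * T ^ 2 + 46 * T + 10 ≠ 0 := by
  intro h
  have hd : T ∣ 10 := ⟨-(T ^ 3 - 14 * T ^ 2 + 21 * T + 46), by linarith⟩
  have hle : T ≤ 10 := Int.le_of_dvd (by norm_num) hd
  interval_cases T <;> omega

/-- Let `T ≥ 2` be an integer, set `m = (T-2)/(T+1)` and `c = 3(2T-1)/(T+1)²`,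
and define `L(r) = (T-1)·ξ(r) - ((T-1)/2)·log(c + (r-m)²)`.  Then the fifth
derivative of `L` at `1` equals
`(T-1)·ξ'''''(1) - (1/3)·(T-1)·(5T² - 20T + 11)`, where
`ξ'''''(1) = (T-2)(T-3)(T-4)(T-5)/30`, and this quantity is nonzero for every
integer `T ≥ 2`. -/
theorem stmt_19 (T : ℕ) (hT : 2 ≤ T) (m c : ℝ)
    (hm : m = ((T : ℝ) - 2) / ((T : ℝ) + 1))
    (hc : c = 3 * (2 * (T : ℝ) - 1) / ((T : ℝ) + 1) ^ 2)
    (L : ℝ → ℝ)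
    (hL : L = fun r : ℝ =>
      ((T : ℝ) - 1) * xi T r - (((T : ℝ) - 1) / 2) * Real.log (c + (r - m) ^ 2)) :
    iteratedDeriv 5 L 1
        = ((T : ℝ) - 1) * iteratedDeriv 5 (xi T) 1
            - (1 / 3) * ((T : ℝ) - 1) * (5 * (T : ℝ) ^ 2 - 20 * (T : ℝ) + 11)
    ∧ iteratedDeriv 5 (xi T) 1
        = ((T : ℝ) - 2) * ((T : ℝ) - 3) * ((T : ℝ) - 4) * ((T : ℝ) - 5) / 30
    ∧ iteratedDeriv 5 L 1 ≠ 0 := by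
  have hT' : (2 : ℝ) ≤ T := by exact_mod_cast hT
  have hT1 : (T : ℝ) + 1 ≠ 0 := by linarith
  have hc0 : 0 < c := by
    rw [hc]
    have : 0 < 2 * (T : ℝ) - 1 := by linarith
    positivity
  have hq : ∀ r : ℝ, c + (r - m) ^ 2 ≠ 0 := fun r => by positivity
  have hlog : ContDiff ℝ 5 (fun r : ℝ => Real.log (c + (r - m) ^ 2)) :=
    ContDiff.log (by fun_prop) hq
  have hxi := contDiff_xi T
  have hum : (1 : ℝ) - m = 3 / ((T : ℝ) + 1) := by
    rw [hm]
    field_simp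
    ring
  have hq1 : c + (1 - m) ^ 2 = 6 / ((T : ℝ) + 1) := by
    rw [hum, hc]
    field_simp
    ring
  have hL5 : iteratedDeriv 5 L 1
      = ((T : ℝ) - 1) * iteratedDeriv 5 (xi T) 1
        - (1 / 3) * ((T : ℝ) - 1) * (5 * (T : ℝ) ^ 2 - 20 * (T : ℝ) + 11) := by
    rw [hL, iteratedDeriv_fun_sub (contDiff_const.mul hxi).contDiffAt
      (contDiff_const.mul hlog).contDiffAt, iteratedDeriv_const_mul_field,
      iteratedDeriv_const_mul_field, iteratedDeriv_five_log_quadratic m c hq]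
    beta_reduce
    rw [hq1, hum, hc]
    field_simp
    ring
  refine ⟨hL5, iteratedDeriv_five_xi T hT, ?_⟩
  rw [hL5, iteratedDeriv_five_xi T hT]
  have hquartic : (T : ℝ) ^ 4 - 14 * (T : ℝ) ^ 3 + 21 * (T : ℝ) ^ 2 + 46 * (T : ℝ) + 10 ≠ 0 := by
    exact_mod_cast quartic_ne_zero (T : ℤ) (by exact_mod_cast hT)
  have hfac : ((T : ℝ) - 1) / 30 ≠ 0 := by
    have : 0 < (T : ℝ) - 1 := by linarith
    positivity
  convert mul_ne_zero hfac hquartic using 1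
  ring
end
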